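/- (Uniform from L¹-convergence.) Let f : ℝ^d → ℝ be a convex function of at most polynomial growth, let x ∈ ℝ^d, p ∈ ℝ^d, and let Q be a d × d real matrix, and suppose lim_{t → 0⁺} (1/t) ∫_{ℝ^d} |f(x + y) − f(x) − ⟨p, y⟩ − (1/2)⟨Q y, y⟩| · φ_t(y) dy = 0, where φ_t(y) = (2πt)^{−d/2} exp(−‖y‖²/(2t)). Then f is second differentiable at x with derivatives (p, Q); that is, lim_{h → 0} |f(x + h) − f(x) − ⟨p, h⟩ − (1/2)⟨Q h, h⟩| / ‖h‖² = 0. -/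

import Mathlib

open MeasureTheory Filter Metric
open scoped Topology ENNReal NNReal RealInnerProductSpace

/-- The `d`-dimensional Gaussian heat kernel `φ_t`. -/
noncomputable def heatKernel (d : ℕ) (t : ℝ) (y : EuclideanSpace ℝ (Fin d)) : ℝ :=
  (2 * Real.pi * t) ^ (-(d : ℝ) / 2) * Real.exp (-‖y‖ ^ 2 / (2 * t))

/-- The quadratic form `⟨M y, y⟩` of a matrix `M`. -/
noncomputable def quadForm (d : ℕ) (M : Matrix (Fin d) (Fin d) ℝ)
    (y : EuclideanSpace ℝ (Fin d)) : ℝ :=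
  ∑ i, ∑ j, M i j * y i * y j

/-!
The remainder `g y = f (x + y) - f x - ⟪p, y⟫ - ⟪T y, y⟫ / 2` of a convex function is semiconvex,
that is, strongly convex with the negative modulus `-‖T‖`. Semiconvexity on the segments
`[h - z, h + z]` and `[h, h + 2z]` bounds `g h` above and below by values of `g` at the points
`h ± z` and `h + 2z`, up to `‖T‖ ‖z‖²`. Averaging over `‖z‖ < δ ‖h‖` gives
`|g h| ≤ C δ⁻ᵈ ‖h‖⁻ᵈ ∫_{‖y‖ < 2‖h‖} |g y| dy + ‖T‖ δ² ‖h‖²`. The integral is `o(‖h‖ᵈ⁺²)`, because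
the heat kernel at time `r²` is at least `c r⁻ᵈ` on the ball of radius `r`, and `δ` is arbitrary.
-/

open Asymptotics Module

section Semiconvex

variable {E : Type*} [NormedAddCommGroup E] [NormedSpace ℝ E] {s t : Set E} {m : ℝ} {g : E → ℝ}

lemma strongConvexOn_of_subset (hg : StrongConvexOn s m g) (hts : t ⊆ s) (ht : Convex ℝ t) :
    StrongConvexOn t m g :=
  ⟨ht, fun _ hu _ hv ↦ hg.2 (hts hu) (hts hv)⟩

lemma two_mul_le_of_strongConvexOn (hg : StrongConvexOn s m g) {h z : E} (hadd : h + z ∈ s)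
    (hsub : h - z ∈ s) : 2 * g h ≤ g (h + z) + g (h - z) - m * ‖z‖ ^ 2 := by
  have hmid := hg.2 hadd hsub one_half_pos.le one_half_pos.le (add_halves 1)
  have hcenter : (1 / 2 : ℝ) • (h + z) + (1 / 2 : ℝ) • (h - z) = h := by module
  have hdiff : ‖h + z - (h - z)‖ = 2 * ‖z‖ := by
    rw [show h + z - (h - z) = (2 : ℝ) • z by module, norm_smul, Real.norm_two]
  rw [hcenter, hdiff, smul_eq_mul, smul_eq_mul] at hmid
  linarith

/-- The combination of values of `W` around `h`, with total weight `4`, that controls `W h`, up to a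
multiple of `‖z‖ ^ 2`, when `W = |g|` for a semiconvex `g`. -/
def semiconvexStencil (W : E → ℝ) (h z : E) : ℝ :=
  2 * W (h + z) + W (h - z) + W (h + (2 : ℝ) • z)

lemma abs_le_semiconvexStencil_add (hg : StrongConvexOn s m g) {h z : E} (hh : h ∈ s)
    (hadd : h + z ∈ s) (hsub : h - z ∈ s) (hadd₂ : h + (2 : ℝ) • z ∈ s) :
    |g h| ≤ semiconvexStencil (fun y ↦ |g y|) h z + |m| * ‖z‖ ^ 2 := by
  have upper := two_mul_le_of_strongConvexOn hg hadd hsub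
  have lower : 2 * g (h + z) ≤ g (h + (2 : ℝ) • z) + g h - m * ‖z‖ ^ 2 := by
    have htop : h + z + z = h + (2 : ℝ) • z := by module
    have hbot : h + z - z = h := by module
    rw [← htop] at hadd₂ ⊢
    rw [← hbot] at hh
    simpa only [hbot] using two_mul_le_of_strongConvexOn hg hadd₂ hh
  have hm : |m * ‖z‖ ^ 2| = |m| * ‖z‖ ^ 2 := by rw [abs_mul, abs_of_nonneg (sq_nonneg ‖z‖)]
  unfold semiconvexStencil
  grind

lemma abs_le_semiconvexStencil_indicator_add {h z : E} {ρ : ℝ}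
    (hg : StrongConvexOn (ball h (2 * ρ)) m g) (hz : ‖z‖ < ρ) :
    |g h| ≤ semiconvexStencil ((ball h (2 * ρ)).indicator fun y ↦ |g y|) h z + |m| * ρ ^ 2 := by
  have hρ : 0 < ρ := (norm_nonneg z).trans_lt hz
  have hh : h ∈ ball h (2 * ρ) := mem_ball_self (by positivity)
  have hadd : h + z ∈ ball h (2 * ρ) := by
    rw [mem_ball_iff_norm, add_sub_cancel_left]
    linarith
  have hsub : h - z ∈ ball h (2 * ρ) := by
    rw [mem_ball_iff_norm, sub_sub_cancel_left, norm_neg]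
    linarith
  have hadd₂ : h + (2 : ℝ) • z ∈ ball h (2 * ρ) := by
    rw [mem_ball_iff_norm, add_sub_cancel_left, norm_smul, Real.norm_two]
    linarith
  have hmz : |m| * ‖z‖ ^ 2 ≤ |m| * ρ ^ 2 := by gcongr
  have hstencil := abs_le_semiconvexStencil_add hg hh hadd hsub hadd₂
  simp only [semiconvexStencil, Set.indicator_of_mem hadd, Set.indicator_of_mem hsub,
    Set.indicator_of_mem hadd₂] at hstencil ⊢
  linarith

end Semiconvex

section Averaging

lemma eventually_ball_two_mul_norm_subset {E : Type*} [SeminormedAddCommGroup E]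
    {s : Set E} (hs : s ∈ 𝓝 (0 : E)) :
    ∀ᶠ h in 𝓝 (0 : E), ball 0 (2 * ‖h‖) ⊆ s := by
  obtain ⟨ε, hε, hεs⟩ := Metric.mem_nhds_iff.1 hs
  filter_upwards [ball_mem_nhds 0 (half_pos hε)] with h hh
  have hh' : ‖h‖ < ε / 2 := mem_ball_zero_iff.1 hh
  exact (ball_subset_ball (by linarith)).trans hεs

lemma isLittleO_integral_ball_two_mul_norm {E : Type*} [NormedAddCommGroup E] [MeasurableSpace E]
    {μ : Measure E} {g : E → ℝ} {n : ℕ}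
    (hmean : (fun r : ℝ ↦ ∫ y in ball 0 r, |g y| ∂μ) =o[𝓝[>] 0] fun r ↦ r ^ n) :
    (fun h : E ↦ ∫ y in ball 0 (2 * ‖h‖), |g y| ∂μ) =o[𝓝[≠] 0] fun h ↦ ‖h‖ ^ n := by
  have hdouble : Tendsto (fun h : E ↦ 2 * ‖h‖) (𝓝[≠] 0) (𝓝[>] 0) := by
    refine tendsto_nhdsWithin_iff.2 ⟨?_, ?_⟩
    · simpa using tendsto_norm_zero.mono_left nhdsWithin_le_nhds |>.const_mul (2 : ℝ)
    · filter_upwards [self_mem_nhdsWithin] with h hh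
      exact mul_pos two_pos (norm_pos_iff.2 hh)
  simpa only [Function.comp_def, mul_pow,
    isLittleO_const_mul_right_iff (pow_ne_zero _ (two_ne_zero' ℝ))] using
    hmean.comp_tendsto hdouble

lemma exists_pos_le_half_mul_sq_lt (c : ℝ) {ε : ℝ} (hε : 0 < ε) :
    ∃ δ : ℝ, 0 < δ ∧ δ ≤ 1 / 2 ∧ c * δ ^ 2 < ε := by
  have hlim : Tendsto (fun δ : ℝ ↦ c * δ ^ 2) (𝓝[>] 0) (𝓝 0) :=
    ((by fun_prop : Continuous fun δ : ℝ ↦ c * δ ^ 2).tendsto' 0 0 (by simp)).mono_left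
      nhdsWithin_le_nhds
  obtain ⟨δ, hδε, hδ, hδ'⟩ := ((hlim.eventually_lt_const hε).and
    (Ioc_mem_nhdsGT (one_half_pos : (0 : ℝ) < 1 / 2))).exists
  exact ⟨δ, hδ, hδ', hδε⟩

lemma measureReal_ball_pos {X : Type*} [PseudoMetricSpace X] [ProperSpace X] [MeasurableSpace X]
    (μ : Measure X) [μ.IsOpenPosMeasure] [IsFiniteMeasureOnCompacts μ] (x : X) {r : ℝ}
    (hr : 0 < r) : 0 < μ.real (ball x r) :=
  ENNReal.toReal_pos (measure_ball_pos μ x hr).ne' measure_ball_lt_top.ne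

variable {E : Type*} [NormedAddCommGroup E] [NormedSpace ℝ E] [FiniteDimensional ℝ E]
  [MeasurableSpace E] [BorelSpace E] {μ : Measure E} [μ.IsAddHaarMeasure]
  {s : Set E} {m : ℝ} {g : E → ℝ}

lemma integral_comp_add_two_smul_le {W : E → ℝ} (hW : 0 ≤ W) (h : E) :
    ∫ z, W (h + (2 : ℝ) • z) ∂μ ≤ ∫ z, W z ∂μ := by
  rw [Measure.integral_comp_smul μ (fun z ↦ W (h + z)) 2, integral_add_left_eq_self W h,
    smul_eq_mul, abs_of_nonneg (by positivity)]
  exact mul_le_of_le_one_left (integral_nonneg hW)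
    (inv_le_one_of_one_le₀ (one_le_pow₀ one_le_two))

lemma integrable_semiconvexStencil {W : E → ℝ} (hW : Integrable W μ) (h : E) :
    Integrable (semiconvexStencil W h) μ :=
  (((hW.comp_add_left h).const_mul 2).add (hW.comp_sub_left h)).add
    ((hW.comp_add_left h).comp_smul two_ne_zero)

lemma integral_semiconvexStencil_le {W : E → ℝ} (hW : Integrable W μ) (hW_nonneg : 0 ≤ W)
    (h : E) : ∫ z, semiconvexStencil W h z ∂μ ≤ 4 * ∫ z, W z ∂μ := by
  have hi_add : Integrable (fun z ↦ 2 * W (h + z)) μ := (hW.comp_add_left h).const_mul 2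
  have hi_sub : Integrable (fun z ↦ W (h - z)) μ := hW.comp_sub_left h
  have hi_add₂ : Integrable (fun z ↦ W (h + (2 : ℝ) • z)) μ :=
    (hW.comp_add_left h).comp_smul two_ne_zero
  simp only [semiconvexStencil]
  rw [integral_add (by exact hi_add.add hi_sub) hi_add₂, integral_add hi_add hi_sub,
    integral_const_mul, integral_add_left_eq_self W h, integral_sub_left_eq_self W μ h]
  linarith [integral_comp_add_two_smul_le (μ := μ) hW_nonneg h]

lemma measureReal_ball_mul_abs_le_of_strongConvexOn {h : E} {ρ : ℝ}
    (hg : StrongConvexOn (ball h (2 * ρ)) m g) (hgi : IntegrableOn g (ball h (2 * ρ)) μ) :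
    μ.real (ball 0 ρ) * |g h| ≤
      4 * (∫ y in ball h (2 * ρ), |g y| ∂μ) + μ.real (ball 0 ρ) * (|m| * ρ ^ 2) := by
  set W : E → ℝ := (ball h (2 * ρ)).indicator fun y ↦ |g y|
  have hW : Integrable W μ := (integrable_indicator_iff measurableSet_ball).2 hgi.abs
  have hW_nonneg : 0 ≤ W := Set.indicator_nonneg fun _ _ ↦ abs_nonneg _
  have hstencil := integrable_semiconvexStencil hW h
  have hstencil_nonneg : 0 ≤ semiconvexStencil W h := fun z ↦
    add_nonneg (add_nonneg (mul_nonneg zero_le_two (hW_nonneg _)) (hW_nonneg _)) (hW_nonneg _)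
  have hi_const (c : ℝ) : IntegrableOn (fun _ ↦ c) (ball (0 : E) ρ) μ :=
    integrableOn_const measure_ball_lt_top.ne
  calc μ.real (ball 0 ρ) * |g h| = ∫ _ in ball (0 : E) ρ, |g h| ∂μ := by
        rw [setIntegral_const, smul_eq_mul]
    _ ≤ ∫ z in ball (0 : E) ρ, (semiconvexStencil W h z + |m| * ρ ^ 2) ∂μ :=
        setIntegral_mono_on (hi_const _) (hstencil.integrableOn.add (hi_const _))
          measurableSet_ball fun z hz ↦
            abs_le_semiconvexStencil_indicator_add hg (mem_ball_zero_iff.1 hz)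
    _ = (∫ z in ball (0 : E) ρ, semiconvexStencil W h z ∂μ)
          + μ.real (ball 0 ρ) * (|m| * ρ ^ 2) := by
        rw [integral_add hstencil.integrableOn (hi_const _), setIntegral_const, smul_eq_mul]
    _ ≤ 4 * (∫ y, W y ∂μ) + μ.real (ball 0 ρ) * (|m| * ρ ^ 2) := by
        gcongr
        exact (setIntegral_le_integral hstencil (.of_forall hstencil_nonneg)).trans
          (integral_semiconvexStencil_le hW hW_nonneg h)
    _ = _ := by rw [integral_indicator measurableSet_ball]

lemma abs_le_of_strongConvexOn_ball_norm {h : E} {δ : ℝ} (hh : h ≠ 0) (hδ : 0 < δ)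
    (hδ' : δ ≤ 1 / 2) (hg : StrongConvexOn (ball 0 (2 * ‖h‖)) m g)
    (hgi : IntegrableOn g (ball 0 (2 * ‖h‖)) μ) :
    |g h| ≤ 4 / (δ ^ finrank ℝ E * μ.real (ball 0 1)) / ‖h‖ ^ finrank ℝ E *
      (∫ y in ball 0 (2 * ‖h‖), |g y| ∂μ) + |m| * δ ^ 2 * ‖h‖ ^ 2 := by
  have hr : 0 < ‖h‖ := norm_pos_iff.2 hh
  have hsubset : ball h (2 * (δ * ‖h‖)) ⊆ ball 0 (2 * ‖h‖) :=
    ball_subset_ball' (by rw [dist_zero_right]; nlinarith)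
  have hω := measureReal_ball_pos μ (0 : E) one_pos
  have hvolume : μ.real (ball (0 : E) (δ * ‖h‖)) =
      (δ * ‖h‖) ^ finrank ℝ E * μ.real (ball 0 1) := by
    rw [measureReal_def, Measure.addHaar_ball_of_pos _ _ (by positivity), ENNReal.toReal_mul,
      ENNReal.toReal_ofReal (by positivity), measureReal_def]
  have havg := measureReal_ball_mul_abs_le_of_strongConvexOn
    (strongConvexOn_of_subset hg hsubset (convex_ball _ _)) (hgi.mono_set hsubset)
  have hmono : ∫ y in ball h (2 * (δ * ‖h‖)), |g y| ∂μ ≤ ∫ y in ball 0 (2 * ‖h‖), |g y| ∂μ :=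
    setIntegral_mono_set hgi.abs (.of_forall fun _ ↦ abs_nonneg _) hsubset.eventuallyLE
  rw [hvolume] at havg
  refine le_of_mul_le_mul_left (havg.trans ?_)
    (by positivity : 0 < (δ * ‖h‖) ^ finrank ℝ E * μ.real (ball (0 : E) 1))
  calc _ ≤ 4 * (∫ y in ball 0 (2 * ‖h‖), |g y| ∂μ) +
        (δ * ‖h‖) ^ finrank ℝ E * μ.real (ball (0 : E) 1) * (|m| * (δ * ‖h‖) ^ 2) := by gcongr
    _ = _ := by
      rw [mul_pow]
      field_simp

theorem isLittleO_norm_sq_of_isLittleO_integral_ball (hs : s ∈ 𝓝 0) (hg : StrongConvexOn s m g)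
    (hgi : IntegrableAtFilter g (𝓝 0) μ)
    (hmean : (fun r : ℝ ↦ ∫ y in ball 0 r, |g y| ∂μ) =o[𝓝[>] 0] fun r ↦ r ^ (finrank ℝ E + 2)) :
    g =o[𝓝[≠] 0] fun h ↦ ‖h‖ ^ 2 := by
  obtain ⟨u, hu, hgu⟩ := hgi
  refine isLittleO_iff.2 fun ε hε ↦ ?_
  obtain ⟨δ, hδ, hδ', hδ_small⟩ := exists_pos_le_half_mul_sq_lt |m| (half_pos hε)
  have hω := measureReal_ball_pos μ (0 : E) one_pos
  set K := 4 / (δ ^ finrank ℝ E * μ.real (ball (0 : E) 1))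
  have hKpos : 0 < K := by positivity
  filter_upwards [(isLittleO_integral_ball_two_mul_norm hmean).bound
      (by positivity : 0 < ε / 2 / K), self_mem_nhdsWithin,
    nhdsWithin_le_nhds (eventually_ball_two_mul_norm_subset (inter_mem hs hu))]
    with h hsmall hh hball
  have hr : 0 < ‖h‖ := norm_pos_iff.2 hh
  have hbound := abs_le_of_strongConvexOn_ball_norm hh hδ hδ'
    (strongConvexOn_of_subset hg (hball.trans Set.inter_subset_left) (convex_ball _ _))
    (hgu.mono_set (hball.trans Set.inter_subset_right))
  simp only [Real.norm_eq_abs] at hsmall ⊢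
  rw [abs_of_nonneg (by positivity : 0 ≤ ‖h‖ ^ (finrank ℝ E + 2))] at hsmall
  rw [abs_of_nonneg (by positivity : 0 ≤ ‖h‖ ^ 2)]
  calc |g h| ≤ K / ‖h‖ ^ finrank ℝ E * (ε / 2 / K * ‖h‖ ^ (finrank ℝ E + 2)) +
        ε / 2 * ‖h‖ ^ 2 := by
        refine hbound.trans ?_
        gcongr
        exact (le_abs_self _).trans hsmall
    _ = ε * ‖h‖ ^ 2 := by
        rw [pow_add]
        field_simp
        ring

end Averaging

section Remainder

variable {E : Type*} [NormedAddCommGroup E] [InnerProductSpace ℝ E]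

/-- The error at displacement `y` of the second-order expansion of `f` at `x` with gradient `p` and
Hessian `T`. The operator `T` is not required to be symmetric. -/
noncomputable def secondOrderRemainder (f : E → ℝ) (x p : E) (T : E →L[ℝ] E) (y : E) : ℝ :=
  f (x + y) - f x - ⟪p, y⟫ - (1 / 2) * ⟪T y, y⟫

lemma inner_map_self_convexCombination (T : E →L[ℝ] E) (u v : E) {a b : ℝ} (hab : a + b = 1) :
    ⟪T (a • u + b • v), a • u + b • v⟫ =
      a * ⟪T u, u⟫ + b * ⟪T v, v⟫ - a * b * ⟪T (u - v), u - v⟫ := by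
  obtain rfl := eq_sub_of_add_eq hab
  simp only [map_add, map_sub, map_smul, inner_add_left, inner_add_right, inner_sub_left,
    inner_sub_right, real_inner_smul_left, real_inner_smul_right]
  ring

lemma abs_inner_map_self_le (T : E →L[ℝ] E) (y : E) : |⟪T y, y⟫| ≤ ‖T‖ * ‖y‖ ^ 2 := by
  calc |⟪T y, y⟫| ≤ ‖T y‖ * ‖y‖ := abs_real_inner_le_norm _ _
    _ ≤ ‖T‖ * ‖y‖ * ‖y‖ := by gcongr; exact T.le_opNorm y
    _ = ‖T‖ * ‖y‖ ^ 2 := by ring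

variable {f : E → ℝ} {s : Set E}

lemma strongConvexOn_secondOrderRemainder (hf : ConvexOn ℝ s f) (x p : E) (T : E →L[ℝ] E) :
    StrongConvexOn ((fun y ↦ x + y) ⁻¹' s) (-‖T‖) (secondOrderRemainder f x p T) := by
  refine ⟨hf.1.translate_preimage_right x, fun u hu v hv a b ha hb hab ↦ ?_⟩
  have hcenter : x + (a • u + b • v) = a • (x + u) + b • (x + v) := by
    calc x + (a • u + b • v) = (a + b) • x + (a • u + b • v) := by rw [hab, one_smul]
      _ = _ := by module
  have hconvex := hf.2 hu hv ha hb hab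
  have hquad := mul_le_mul_of_nonneg_left (abs_le.1 (abs_inner_map_self_le T (u - v))).2
    (mul_nonneg ha hb)
  have hconst : f x = a * f x + b * f x := by rw [← add_mul, hab, one_mul]
  simp only [secondOrderRemainder, inner_map_self_convexCombination T u v hab, hcenter,
    inner_add_right, real_inner_smul_right, smul_eq_mul] at hconvex ⊢
  linarith

variable [FiniteDimensional ℝ E]

lemma continuousOn_interior_of_strongConvexOn {m : ℝ} {g : E → ℝ} (hg : StrongConvexOn s m g) :
    ContinuousOn g (interior s) := by
  have hconvex := (strongConvexOn_iff_convex.1 hg).continuousOn_interior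
  have hsq : Continuous fun y : E ↦ m / 2 * ‖y‖ ^ 2 := by fun_prop
  exact (hconvex.add hsq.continuousOn).congr fun y _ ↦ (sub_add_cancel (g y) _).symm

variable [MeasurableSpace E] [BorelSpace E] {μ : Measure E}

lemma integrableAtFilter_nhds_of_strongConvexOn [IsLocallyFiniteMeasure μ] {m : ℝ} {g : E → ℝ}
    {x : E} (hg : StrongConvexOn s m g) (hs : s ∈ 𝓝 x) : IntegrableAtFilter g (𝓝 x) μ := by
  have hinterior : interior s ∈ 𝓝 x := interior_mem_nhds.2 hs
  have := (continuousOn_interior_of_strongConvexOn hg).integrableAt_nhdsWithin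
    (μ := μ) isOpen_interior.measurableSet (mem_of_mem_nhds hinterior)
  rwa [nhdsWithin_eq_nhds.2 hinterior] at this

theorem secondOrderRemainder_isLittleO_of_isLittleO_integral_ball [μ.IsAddHaarMeasure]
    (hf : ConvexOn ℝ s f) {x : E} (hs : s ∈ 𝓝 x) {p : E} {T : E →L[ℝ] E}
    (hmean : (fun r : ℝ ↦ ∫ y in ball 0 r, |secondOrderRemainder f x p T y| ∂μ)
      =o[𝓝[>] 0] fun r ↦ r ^ (finrank ℝ E + 2)) :
    secondOrderRemainder f x p T =o[𝓝[≠] 0] fun h ↦ ‖h‖ ^ 2 := by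
  have hs' : (fun y ↦ x + y) ⁻¹' s ∈ 𝓝 0 :=
    (continuous_const_add x).continuousAt.preimage_mem_nhds (by simpa using hs)
  have hg := strongConvexOn_secondOrderRemainder hf x p T
  exact isLittleO_norm_sq_of_isLittleO_integral_ball hs' hg
    (integrableAtFilter_nhds_of_strongConvexOn hg hs') hmean

end Remainder

section HeatKernel

variable {d : ℕ} {g : EuclideanSpace ℝ (Fin d) → ℝ}

lemma heatKernel_nonneg {t : ℝ} (ht : 0 ≤ t) (y : EuclideanSpace ℝ (Fin d)) :
    0 ≤ heatKernel d t y := by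
  unfold heatKernel
  positivity

lemma continuous_heatKernel (d : ℕ) (t : ℝ) : Continuous (heatKernel d t) := by
  unfold heatKernel
  fun_prop

lemma two_pi_mul_sq_rpow_neg_half (d : ℕ) {r : ℝ} (hr : 0 ≤ r) :
    (2 * Real.pi * r ^ 2) ^ (-(d : ℝ) / 2) = ((√(2 * Real.pi) * r) ^ d)⁻¹ := by
  have hsq : 2 * Real.pi * r ^ 2 = (√(2 * Real.pi) * r) ^ (2 : ℝ) := by
    rw [Real.rpow_two, mul_pow, Real.sq_sqrt (by positivity)]
  rw [hsq, ← Real.rpow_mul (by positivity), ← Real.rpow_natCast, ← Real.rpow_neg (by positivity)]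
  congr 1
  ring

lemma one_le_mul_heatKernel_sq {r : ℝ} {y : EuclideanSpace ℝ (Fin d)} (hr : 0 < r)
    (hy : ‖y‖ ≤ r) :
    1 ≤ (√(2 * Real.pi) * r) ^ d * Real.exp (1 / 2) * heatKernel d (r ^ 2) y := by
  have hexponent : 0 ≤ 1 / 2 + -‖y‖ ^ 2 / (2 * r ^ 2) := by
    have : ‖y‖ ^ 2 / (2 * r ^ 2) ≤ 1 / 2 := by
      rw [div_le_iff₀ (by positivity)]
      linarith [pow_le_pow_left₀ (norm_nonneg y) hy 2]
    rw [neg_div]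
    linarith
  calc 1 ≤ Real.exp (1 / 2 + -‖y‖ ^ 2 / (2 * r ^ 2)) := Real.one_le_exp hexponent
    _ = _ := by
      rw [heatKernel, two_pi_mul_sq_rpow_neg_half d hr.le, Real.exp_add]
      field_simp

lemma setIntegral_ball_abs_le_integral_mul_heatKernel {r : ℝ} (hr : 0 < r)
    (hinteg : Integrable fun y ↦ |g y| * heatKernel d (r ^ 2) y) :
    ∫ y in ball 0 r, |g y| ≤ (√(2 * Real.pi) * r) ^ d * Real.exp (1 / 2) *
      ∫ y, |g y| * heatKernel d (r ^ 2) y := by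
  set K := (√(2 * Real.pi) * r) ^ d * Real.exp (1 / 2)
  have hnonneg (y : EuclideanSpace ℝ (Fin d)) : 0 ≤ K * (|g y| * heatKernel d (r ^ 2) y) := by
    have := heatKernel_nonneg (sq_nonneg r) y
    positivity
  calc ∫ y in ball 0 r, |g y| ≤ ∫ y in ball 0 r, K * (|g y| * heatKernel d (r ^ 2) y) := by
        refine integral_mono_of_nonneg (.of_forall fun _ ↦ abs_nonneg _)
          (hinteg.const_mul K).integrableOn ?_
        refine ae_restrict_of_forall_mem measurableSet_ball fun y hy ↦ ?_
        have hker := one_le_mul_heatKernel_sq hr (mem_ball_zero_iff.1 hy).le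
        linarith [mul_le_mul_of_nonneg_left hker (abs_nonneg (g y))]
    _ ≤ ∫ y, K * (|g y| * heatKernel d (r ^ 2) y) :=
        setIntegral_le_integral (hinteg.const_mul K) (.of_forall hnonneg)
    _ = K * ∫ y, |g y| * heatKernel d (r ^ 2) y := integral_const_mul _ _

lemma isLittleO_setIntegral_ball_of_tendsto_integral_mul_heatKernel
    (hinteg : ∀ᶠ t in 𝓝[>] 0, Integrable fun y ↦ |g y| * heatKernel d t y)
    (hlim : Tendsto (fun t : ℝ ↦ (1 / t) * ∫ y, |g y| * heatKernel d t y) (𝓝[>] 0) (𝓝 0)) :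
    (fun r : ℝ ↦ ∫ y in ball 0 r, |g y|) =o[𝓝[>] 0] fun r ↦ r ^ (d + 2) := by
  have hsq : Tendsto (fun r : ℝ ↦ r ^ 2) (𝓝[>] 0) (𝓝[>] 0) := by
    refine tendsto_nhdsWithin_iff.2 ⟨?_, ?_⟩
    · exact ((continuous_pow 2).tendsto' 0 0 (by simp)).mono_left nhdsWithin_le_nhds
    · filter_upwards [self_mem_nhdsWithin] with r hr using pow_pos (Set.mem_Ioi.1 hr) 2
  have hscaled : (fun r : ℝ ↦ r ^ (d + 2) * (1 / r ^ 2 * ∫ y, |g y| * heatKernel d (r ^ 2) y))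
      =o[𝓝[>] 0] fun r ↦ r ^ (d + 2) := by
    simpa using (isBigO_refl (fun r : ℝ ↦ r ^ (d + 2)) _).mul_isLittleO
      ((isLittleO_one_iff ℝ).2 (hlim.comp hsq))
  refine IsBigO.trans_isLittleO (.of_bound (√(2 * Real.pi) ^ d * Real.exp (1 / 2)) ?_) hscaled
  filter_upwards [hsq.eventually hinteg, self_mem_nhdsWithin] with r hr_int hr
  have hr : 0 < r := hr
  rw [Real.norm_of_nonneg (integral_nonneg fun _ ↦ abs_nonneg _)]
  calc _ ≤ _ := setIntegral_ball_abs_le_integral_mul_heatKernel hr hr_int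
    _ = √(2 * Real.pi) ^ d * Real.exp (1 / 2) *
        (r ^ (d + 2) * (1 / r ^ 2 * ∫ y, |g y| * heatKernel d (r ^ 2) y)) := by
      rw [mul_pow, pow_add]
      field_simp
    _ ≤ _ := by
      gcongr
      exact Real.le_norm_self _

end HeatKernel

section PolynomialGrowth

lemma integrable_exp_neg_mul_norm_sq {V : Type*} [NormedAddCommGroup V] [InnerProductSpace ℝ V]
    [FiniteDimensional ℝ V] [MeasurableSpace V] [BorelSpace V] {b : ℝ} (hb : 0 < b) :
    Integrable fun y : V ↦ Real.exp (-b * ‖y‖ ^ 2) := by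
  have hcomplex := GaussianFourier.integrable_cexp_neg_mul_sq_norm_add (V := V) (b := (b : ℂ))
    (by simpa using hb) 0 0
  refine hcomplex.norm.congr (.of_forall fun y ↦ ?_)
  simp [Complex.norm_exp, ← Complex.ofReal_pow]

lemma one_add_pow_mul_exp_neg_sq_le (k : ℕ) {r t : ℝ} (hr : 0 ≤ r) (ht : 0 < t) :
    (1 + r) ^ k * Real.exp (-r ^ 2 / (2 * t)) ≤
      k.factorial * Real.exp (1 + t) * Real.exp (-(1 / (4 * t)) * r ^ 2) := by
  have hpow : (1 + r) ^ k ≤ k.factorial * Real.exp (1 + r) := by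
    rw [mul_comm, ← div_le_iff₀ (by positivity)]
    exact Real.pow_div_factorial_le_exp _ (by positivity) k
  have hsquare : r + -r ^ 2 / (2 * t) = t + -(1 / (4 * t)) * r ^ 2 - (r - 2 * t) ^ 2 / (4 * t) := by
    field_simp
    ring
  have hexponent : 1 + r + -r ^ 2 / (2 * t) ≤ 1 + t + -(1 / (4 * t)) * r ^ 2 := by
    have : 0 ≤ (r - 2 * t) ^ 2 / (4 * t) := by positivity
    linarith
  calc _ ≤ k.factorial * Real.exp (1 + r) * Real.exp (-r ^ 2 / (2 * t)) := by gcongr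
    _ ≤ _ := by
      rw [mul_assoc, mul_assoc, ← Real.exp_add, ← Real.exp_add]
      gcongr

variable {d : ℕ} {g : EuclideanSpace ℝ (Fin d) → ℝ}

lemma integrable_mul_heatKernel_of_abs_le (hg : AEStronglyMeasurable g) {A : ℝ} {k : ℕ}
    (hA : ∀ y, |g y| ≤ A * (1 + ‖y‖) ^ k) {t : ℝ} (ht : 0 < t) :
    Integrable fun y ↦ g y * heatKernel d t y := by
  have hA_nonneg : 0 ≤ A := by simpa using (abs_nonneg _).trans (hA 0)
  set c := (2 * Real.pi * t) ^ (-(d : ℝ) / 2)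
  have hc : 0 ≤ c := by positivity
  refine ((integrable_exp_neg_mul_norm_sq (b := 1 / (4 * t)) (by positivity)).const_mul
    (A * c * (k.factorial * Real.exp (1 + t)))).mono'
    (hg.mul (continuous_heatKernel d t).aestronglyMeasurable) (.of_forall fun y ↦ ?_)
  rw [norm_mul, Real.norm_eq_abs, Real.norm_of_nonneg (heatKernel_nonneg ht.le y)]
  calc |g y| * heatKernel d t y ≤ A * (1 + ‖y‖) ^ k * heatKernel d t y :=
        mul_le_mul_of_nonneg_right (hA y) (heatKernel_nonneg ht.le y)
    _ = A * c * ((1 + ‖y‖) ^ k * Real.exp (-‖y‖ ^ 2 / (2 * t))) := by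
        rw [heatKernel]
        ring
    _ ≤ A * c * (k.factorial * Real.exp (1 + t) * Real.exp (-(1 / (4 * t)) * ‖y‖ ^ 2)) := by
        exact mul_le_mul_of_nonneg_left (one_add_pow_mul_exp_neg_sq_le k (norm_nonneg y) ht)
          (mul_nonneg hA_nonneg hc)
    _ = _ := by ring

lemma abs_comp_add_left_le_mul_one_add_norm_pow {E : Type*} [SeminormedAddCommGroup E] {f : E → ℝ}
    {C : ℝ} {k : ℕ} (hf : ∀ y, |f y| ≤ C * (1 + ‖y‖) ^ k) (x y : E) :
    |f (x + y)| ≤ C * (1 + ‖x‖) ^ k * (1 + ‖y‖) ^ k := by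
  have hC : 0 ≤ C := nonneg_of_mul_nonneg_left ((abs_nonneg _).trans (hf 0)) (by positivity)
  calc |f (x + y)| ≤ C * (1 + ‖x + y‖) ^ k := hf _
    _ ≤ C * ((1 + ‖x‖) * (1 + ‖y‖)) ^ k := by
      gcongr
      nlinarith [norm_add_le x y, mul_nonneg (norm_nonneg x) (norm_nonneg y)]
    _ = _ := by rw [mul_pow, mul_assoc]

lemma integrable_secondOrderRemainder_mul_heatKernel {f : EuclideanSpace ℝ (Fin d) → ℝ}
    (hf : Continuous f) {C : ℝ} {k : ℕ} (hgrowth : ∀ y, |f y| ≤ C * (1 + ‖y‖) ^ k)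
    (x p : EuclideanSpace ℝ (Fin d)) (T : EuclideanSpace ℝ (Fin d) →L[ℝ] EuclideanSpace ℝ (Fin d))
    {t : ℝ} (ht : 0 < t) :
    Integrable fun y ↦ secondOrderRemainder f x p T y * heatKernel d t y := by
  have hvalue := integrable_mul_heatKernel_of_abs_le
    (by fun_prop : Continuous fun y ↦ f (x + y)).aestronglyMeasurable
    (abs_comp_add_left_le_mul_one_add_norm_pow hgrowth x) ht
  have hconst : Integrable fun y ↦ f x * heatKernel d t y :=
    integrable_mul_heatKernel_of_abs_le (A := |f x|) (k := 0) aestronglyMeasurable_const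
      (fun y ↦ by simp) ht
  have hlinear : Integrable fun y ↦ ⟪p, y⟫ * heatKernel d t y := by
    refine integrable_mul_heatKernel_of_abs_le (A := ‖p‖) (k := 1)
      (by fun_prop : Continuous fun y ↦ ⟪p, y⟫).aestronglyMeasurable
      (fun y ↦ (abs_real_inner_le_norm p y).trans ?_) ht
    gcongr
    linarith
  have hquadratic : Integrable fun y ↦ ⟪T y, y⟫ * heatKernel d t y := by
    refine integrable_mul_heatKernel_of_abs_le (A := ‖T‖) (k := 2)
      (by fun_prop : Continuous fun y ↦ ⟪T y, y⟫).aestronglyMeasurable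
      (fun y ↦ (abs_inner_map_self_le T y).trans ?_) ht
    gcongr
    linarith
  refine (((hvalue.sub hconst).sub hlinear).sub (hquadratic.const_mul (1 / 2))).congr
    (.of_forall fun y ↦ ?_)
  simp only [Pi.sub_apply, secondOrderRemainder]
  ring

end PolynomialGrowth

section MatrixHessian

variable {d : ℕ} {f : EuclideanSpace ℝ (Fin d) → ℝ} {x p : EuclideanSpace ℝ (Fin d)}
  {Q : Matrix (Fin d) (Fin d) ℝ}

lemma quadForm_eq_inner_toEuclideanCLM (Q : Matrix (Fin d) (Fin d) ℝ)
    (y : EuclideanSpace ℝ (Fin d)) :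
    quadForm d Q y = ⟪Matrix.toEuclideanCLM (𝕜 := ℝ) Q y, y⟫ := by
  rw [real_inner_comm, Matrix.inner_toEuclideanCLM]
  simp only [quadForm, dotProduct, Matrix.mulVec, Finset.mul_sum]
  exact Finset.sum_congr rfl fun i _ ↦ Finset.sum_congr rfl fun j _ ↦ by ring

lemma eventually_integrable_abs_remainder_mul_heatKernel (hf : Continuous f) {C : ℝ} {k : ℕ}
    (hgrowth : ∀ y, |f y| ≤ C * (1 + ‖y‖) ^ k) :
    ∀ᶠ t in 𝓝[>] 0, Integrable fun y ↦
      |f (x + y) - f x - ⟪p, y⟫ - (1 / 2) * quadForm d Q y| * heatKernel d t y := by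
  filter_upwards [self_mem_nhdsWithin] with t ht
  refine (integrable_secondOrderRemainder_mul_heatKernel hf hgrowth x p
    (Matrix.toEuclideanCLM (𝕜 := ℝ) Q) ht).abs.congr (.of_forall fun y ↦ ?_)
  simp only [abs_mul, abs_of_nonneg (heatKernel_nonneg (le_of_lt ht) y), secondOrderRemainder,
    quadForm_eq_inner_toEuclideanCLM]

theorem second_differentiability_from_L1_general {s : Set (EuclideanSpace ℝ (Fin d))}
    (hf : ConvexOn ℝ s f) (hs : s ∈ 𝓝 x)
    (hinteg : ∀ᶠ t in 𝓝[>] 0, Integrable fun y ↦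
      |f (x + y) - f x - ⟪p, y⟫ - (1 / 2) * quadForm d Q y| * heatKernel d t y)
    (hlim : Tendsto (fun t : ℝ ↦ (1 / t) *
        ∫ y, |f (x + y) - f x - ⟪p, y⟫ - (1 / 2) * quadForm d Q y| * heatKernel d t y)
      (𝓝[>] 0) (𝓝 0)) :
    Tendsto (fun h ↦ |f (x + h) - f x - ⟪p, h⟫ - (1 / 2) * quadForm d Q h| / ‖h‖ ^ 2)
      (𝓝[≠] 0) (𝓝 0) := by
  simp only [quadForm_eq_inner_toEuclideanCLM] at hinteg hlim ⊢
  have hmean := isLittleO_setIntegral_ball_of_tendsto_integral_mul_heatKernel hinteg hlim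
  have hremainder : secondOrderRemainder f x p (Matrix.toEuclideanCLM (𝕜 := ℝ) Q)
      =o[𝓝[≠] 0] fun h ↦ ‖h‖ ^ 2 :=
    secondOrderRemainder_isLittleO_of_isLittleO_integral_ball (μ := volume) hf hs
      (by rwa [finrank_euclideanSpace_fin])
  exact hremainder.abs_left.tendsto_div_nhds_zero

end MatrixHessian

/-- Uniform (pointwise second-order) differentiability from `L¹`-convergence of Gaussian
averages, for a convex function of at most polynomial growth. -/
theorem second_differentiability_from_L1 (d : ℕ)
    (f : EuclideanSpace ℝ (Fin d) → ℝ) (hf : ConvexOn ℝ Set.univ f)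
    (C : ℝ) (hC : 0 < C) (k : ℕ) (hgrowth : ∀ y, |f y| ≤ C * (1 + ‖y‖) ^ k)
    (x p : EuclideanSpace ℝ (Fin d)) (Q : Matrix (Fin d) (Fin d) ℝ)
    (hlim : Filter.Tendsto
      (fun t : ℝ => (1 / t) *
        ∫ y, |f (x + y) - f x - ⟪p, y⟫ - (1 / 2) * quadForm d Q y| * heatKernel d t y)
      (nhdsWithin 0 (Set.Ioi 0)) (nhds 0)) :
    Filter.Tendsto
      (fun h : EuclideanSpace ℝ (Fin d) =>
        |f (x + h) - f x - ⟪p, h⟫ - (1 / 2) * quadForm d Q h| / ‖h‖ ^ 2)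
      (nhdsWithin 0 {(0 : EuclideanSpace ℝ (Fin d))}ᶜ) (nhds 0) := by
  exact second_differentiability_from_L1_general hf univ_mem
    (eventually_integrable_abs_remainder_mul_heatKernel hf.locallyLipschitz.continuous hgrowth) hlim
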